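/- Let T = (t_{ij}) be a positive m×n real matrix and X = X_Γ(T). For any i ∈ [m] and j ∈ [n], setting k = min(m−i, n−j), the contiguous minor det X[{i, i+1, …, i+k}, {j, j+1, …, j+k}] equals the product t_{i,j} · t_{i+1,j+1} ⋯ t_{i+k,j+k}. -/

import Mathlib

/-!
Γ-path sums can be built up one row at a time. A Γ-path through the rows `≤ M` starting above
row `M` reaches row `M` in some column `j'` and leaves it in some column `j ≤ j'`, picking up the
factor `t_{M j'}⁻¹ t_{M j}`. Writing `x^M_{ij}` for the path sums over the rows `< M`, this says
`x^{M+1}_{ij} = t_{Mj} ∑_{j' ≥ j} t_{Mj'}⁻¹ x^M_{ij'}` for `i < M`, and `x^{M+1}_{Mj} = t_{Mj}`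
(`sum_pathPairs_eq_rowSum`, which rests on the unique decomposition of paths in
`sum_pathPairs_succ`). Telescoping neighbouring columns turns this into
`x^{M+1}_{ij} = x^M_{ij} + (t_{Mj} / t_{M,j+1}) x^{M+1}_{i,j+1}` (`rowSum_succ_col`), so removing
row `M` amounts to column operations that stay inside any block of contiguous columns, except at
the last column of the block.

If the block ends in row `M`, these operations, applied to all columns of the block but its last,
clear row `M` of the block except for its corner entry `t`. Expanding along that row gives the
product formula by induction on the size (`det_block_last_row`). If row `M` lies below the block,
the maximality of `k` forces the block to end in the last column of the matrix, where
`x^{M+1}_{ij} = x^M_{ij}`. The operations then remove row `M` without changing the determinant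
(`det_block_last_col`), which reduces this case to the first one.
-/

open Finset

/-- A real matrix is totally positive if every minor (determinant of a square submatrix
obtained by selecting rows and columns in increasing order) is positive. -/
def TotallyPositive {m n : ℕ} (A : Matrix (Fin m) (Fin n) ℝ) : Prop :=
  ∀ (r : ℕ) (f : Fin r → Fin m) (g : Fin r → Fin n),
    StrictMono f → StrictMono g → 0 < (A.submatrix f g).det

/-- A matrix is (strongly) positive if all of its entries are positive. -/
def EntrywisePos {m n : ℕ} (A : Matrix (Fin m) (Fin n) ℝ) : Prop :=
  ∀ i j, 0 < A i j

/-- The weight of the Γ-path encoded by the pair of finsets `(I, J)`.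
A Γ-path with Γ-turns `(i₁,j₁), …, (i_p,j_p)`, where `i₁ < i₂ < ⋯ < i_p` and
`j₁ > j₂ > ⋯ > j_p`, corresponds to the pair `I = {i₁,…,i_p}`, `J = {j₁,…,j_p}`;
the path runs from row vertex `i₁ = min I` to column vertex `j_p = min J`.
Its weight is `t_{i₁j₁} · ∏_{s=1}^{p−1} t_{i_{s+1} j_s}⁻¹ · t_{i_{s+1} j_{s+1}}`. -/
noncomputable def gammaWeight {m n : ℕ} (T : Matrix (Fin m) (Fin n) ℝ)
    (I : Finset (Fin m)) (J : Finset (Fin n)) : ℝ :=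
  if h : I.Nonempty ∧ J.Nonempty ∧ I.card = J.card then
    let p := I.card
    let row : ℕ → Fin m := fun s => (I.sort (· ≤ ·)).getD s (I.min' h.1)
    let col : ℕ → Fin n := fun s => (J.sort (· ≤ ·)).getD (p - 1 - s) (J.min' h.2.1)
    T (row 0) (col 0) *
      ∏ s ∈ Finset.range (p - 1),
        ((T (row (s + 1)) (col s))⁻¹ * T (row (s + 1)) (col (s + 1)))
  else 0

/-- The Γ-path-sum matrix `X_Γ(T)`: its `(i,j)` entry is the sum of the weights of all
Γ-paths from row vertex `i` to column vertex `j`. -/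
noncomputable def XGamma {m n : ℕ} (T : Matrix (Fin m) (Fin n) ℝ) :
    Matrix (Fin m) (Fin n) ℝ :=
  Matrix.of fun i j =>
    ∑ I ∈ Finset.univ.filter (fun I : Finset (Fin m) => I.min = (i : WithTop (Fin m))),
      ∑ J ∈ Finset.univ.filter (fun J : Finset (Fin n) =>
          J.min = (j : WithTop (Fin n)) ∧ J.card = I.card),
        gammaWeight T I J

/-- The weight of the L-path encoded by the pair of finsets `(I, J)`.
An L-path with turns `(i₁,j₁), …, (i_p,j_p)`, where `i₁ > i₂ > ⋯ > i_p` and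
`j₁ < j₂ < ⋯ < j_p`, corresponds to `I = {i₁,…,i_p}`, `J = {j₁,…,j_p}`;
the path runs from row vertex `i₁ = max I` to column vertex `j_p = max J`. -/
noncomputable def lWeight {m n : ℕ} (T : Matrix (Fin m) (Fin n) ℝ)
    (I : Finset (Fin m)) (J : Finset (Fin n)) : ℝ :=
  if h : I.Nonempty ∧ J.Nonempty ∧ I.card = J.card then
    let p := I.card
    let row : ℕ → Fin m := fun s => (I.sort (· ≤ ·)).getD (p - 1 - s) (I.min' h.1)
    let col : ℕ → Fin n := fun s => (J.sort (· ≤ ·)).getD s (J.min' h.2.1)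
    T (row 0) (col 0) *
      ∏ s ∈ Finset.range (p - 1),
        ((T (row (s + 1)) (col s))⁻¹ * T (row (s + 1)) (col (s + 1)))
  else 0

/-- The L-path-sum matrix `X_L(T)`. -/
noncomputable def XL {m n : ℕ} (T : Matrix (Fin m) (Fin n) ℝ) :
    Matrix (Fin m) (Fin n) ℝ :=
  Matrix.of fun i j =>
    ∑ I ∈ Finset.univ.filter (fun I : Finset (Fin m) => I.max = (i : WithBot (Fin m))),
      ∑ J ∈ Finset.univ.filter (fun J : Finset (Fin n) =>
          J.max = (j : WithBot (Fin n)) ∧ J.card = I.card),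
        lWeight T I J

/-- The set of internal vertices traversed by the Γ-path encoded by `(I, J)`:
horizontal segments `{(i_s, b) : j_s ≤ b ≤ j_{s-1}}` (with `j₀` interpreted as the last
column) and vertical segments `{(a, j_s) : i_s ≤ a ≤ i_{s+1}}` (with `i_{p+1}` interpreted
as the last row). -/
def pathVerts {m n : ℕ} (I : Finset (Fin m)) (J : Finset (Fin n)) :
    Finset (Fin m × Fin n) :=
  Finset.univ.filter fun v =>
    (∃ s ∈ Finset.range I.card,
        v.1 = (I.sort (· ≤ ·)).getD s v.1 ∧
        (J.sort (· ≤ ·)).getD (J.card - 1 - s) v.2 ≤ v.2 ∧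
        (s = 0 ∨ v.2 ≤ (J.sort (· ≤ ·)).getD (J.card - s) v.2)) ∨
    (∃ s ∈ Finset.range I.card,
        v.2 = (J.sort (· ≤ ·)).getD (J.card - 1 - s) v.2 ∧
        (I.sort (· ≤ ·)).getD s v.1 ≤ v.1 ∧
        (s + 1 = I.card ∨ v.1 ≤ (I.sort (· ≤ ·)).getD (s + 1) v.1))

/-- The sequence of matrices produced by Cauchon's Algorithm: `cauchonSeq X t` is the
matrix obtained after performing the first `t` steps, the steps being indexed by the
positions `(i,j) ∈ [m]×[n]` (1-based) in increasing reverse lexicographic order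
(`(m,n)` first); the step at 1-based position `(i,j)` is performed on `cauchonSeq X t`
with `t = (m−i)·n + (n−j)`, so that the matrix `X^{(i,j)}` of Cauchon's Algorithm is
`cauchonSeq X ((m−i)·n + (n−j))`. -/
noncomputable def cauchonSeq {m n : ℕ} (X : Matrix (Fin m) (Fin n) ℝ) :
    ℕ → Matrix (Fin m) (Fin n) ℝ
  | 0 => X
  | t + 1 =>
    let Y := cauchonSeq X t
    Matrix.of fun k l =>
      let i0 : Fin m := ⟨m - 1 - t / n,
        lt_of_le_of_lt (Nat.sub_le _ _) (by have := k.isLt; omega)⟩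
      let j0 : Fin n := ⟨n - 1 - t % n,
        lt_of_le_of_lt (Nat.sub_le _ _) (by have := l.isLt; omega)⟩
      if (k : ℕ) < (i0 : ℕ) ∧ (l : ℕ) < (j0 : ℕ) then
        Y k l - Y k j0 * (Y i0 j0)⁻¹ * Y i0 l
      else Y k l

/-- The output `T = X^{(1,1)}` of Cauchon's Algorithm. -/
noncomputable def cauchonOutput {m n : ℕ} (X : Matrix (Fin m) (Fin n) ℝ) :
    Matrix (Fin m) (Fin n) ℝ :=
  cauchonSeq X ((m - 1) * n + (n - 1))

/-- `contigMinorTL A i j` (1-based `i`, `j`) is the minor `det A[{i⋯},{j⋯}]` of the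
largest contiguous submatrix of `A` with top-left corner `(i,j)`, i.e. with rows
`i, …, i+k` and columns `j, …, j+k` where `k = min(M−i, N−j)`; it is `1` (the empty
determinant) if `(i,j)` is out of range. -/
noncomputable def contigMinorTL {M N : ℕ} (A : Matrix (Fin M) (Fin N) ℝ) (i j : ℕ) : ℝ :=
  if h : 1 ≤ i ∧ i ≤ M ∧ 1 ≤ j ∧ j ≤ N then
    (A.submatrix
      (fun s : Fin (min (M - i) (N - j) + 1) =>
        (⟨i - 1 + (s : ℕ), by have := s.isLt; omega⟩ : Fin M))
      (fun s : Fin (min (M - i) (N - j) + 1) =>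
        (⟨j - 1 + (s : ℕ), by have := s.isLt; omega⟩ : Fin N))).det
  else 1

/-- `borderMinorTL A i₀ j₀ i j` (1-based indices, `i₀ < i`, `j₀ < j`) is the minor
`det A[{i₀, i⋯},{j₀, j⋯}]` with rows `{i₀} ∪ {i, …, i+k}` and columns
`{j₀} ∪ {j, …, j+k}` where `k = min(M−i, N−j)`; when the contiguous part is out of range
(`i > M` or `j > N`) it is the single entry `A[{i₀},{j₀}]`, and it is `1` if `(i₀,j₀)`
is out of range. -/
noncomputable def borderMinorTL {M N : ℕ} (A : Matrix (Fin M) (Fin N) ℝ)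
    (i₀ j₀ i j : ℕ) : ℝ :=
  if h : 1 ≤ i₀ ∧ i₀ ≤ M ∧ 1 ≤ j₀ ∧ j₀ ≤ N then
    if h2 : i₀ < i ∧ i ≤ M ∧ j₀ < j ∧ j ≤ N then
      (A.submatrix
        (fun s : Fin (min (M - i) (N - j) + 2) =>
          if (s : ℕ) = 0 then (⟨i₀ - 1, by omega⟩ : Fin M)
          else ⟨i - 1 + ((s : ℕ) - 1), by have := s.isLt; omega⟩)
        (fun s : Fin (min (M - i) (N - j) + 2) =>
          if (s : ℕ) = 0 then (⟨j₀ - 1, by omega⟩ : Fin N)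
          else ⟨j - 1 + ((s : ℕ) - 1), by have := s.isLt; omega⟩)).det
    else A ⟨i₀ - 1, by omega⟩ ⟨j₀ - 1, by omega⟩
  else 1

/-- `borderMinorBR A i j i₀ j₀` (1-based indices, `i < i₀`, `j < j₀`) is the minor
`det A[{⋯i, i₀},{⋯j, j₀}]` with rows `{i−k, …, i} ∪ {i₀}` and columns
`{j−k, …, j} ∪ {j₀}` where `k = min(i−1, j−1)`; when the contiguous part is empty
(`i = 0` or `j = 0`) it is the single entry `A[{i₀},{j₀}]`, and it is `1` if `(i₀,j₀)`
is out of range. -/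
noncomputable def borderMinorBR {M N : ℕ} (A : Matrix (Fin M) (Fin N) ℝ)
    (i j i₀ j₀ : ℕ) : ℝ :=
  if h : 1 ≤ i₀ ∧ i₀ ≤ M ∧ 1 ≤ j₀ ∧ j₀ ≤ N then
    if h2 : 1 ≤ i ∧ i < i₀ ∧ 1 ≤ j ∧ j < j₀ then
      (A.submatrix
        (fun s : Fin (min (i - 1) (j - 1) + 2) =>
          if (s : ℕ) = min (i - 1) (j - 1) + 1 then (⟨i₀ - 1, by omega⟩ : Fin M)
          else ⟨i - 1 - min (i - 1) (j - 1) + (s : ℕ), by have := s.isLt; omega⟩)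
        (fun s : Fin (min (i - 1) (j - 1) + 2) =>
          if (s : ℕ) = min (i - 1) (j - 1) + 1 then (⟨j₀ - 1, by omega⟩ : Fin N)
          else ⟨j - 1 - min (i - 1) (j - 1) + (s : ℕ), by have := s.isLt; omega⟩)).det
    else A ⟨i₀ - 1, by omega⟩ ⟨j₀ - 1, by omega⟩
  else 1

/-! ### Determinants under the one-row recursion -/

/-- The path sums of a matrix `t : ℕ → ℕ → ℝ` with columns `0, …, n - 1`, defined by adding
one row at a time: `rowSum t n M i j` is the sum of the weights of the Γ-paths from row `i` to
column `j` in the array formed by the rows `< M`. A path reaching the new row `M` from above in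
column `j'` and leaving it in column `j ≤ j'` picks up the factor `t_{M j'}⁻¹ t_{M j}`
(which is `1` when it goes straight through). -/
noncomputable def rowSum (t : ℕ → ℕ → ℝ) (n : ℕ) : ℕ → ℕ → ℕ → ℝ
  | 0, _, _ => 0
  | M + 1, i, j =>
    if i = M then t M j
    else ∑ j' ∈ Finset.Ico j n, t M j * ((t M j')⁻¹ * rowSum t n M i j')

theorem rowSum_self (t : ℕ → ℕ → ℝ) (n i j : ℕ) : rowSum t n (i + 1) i j = t i j := by
  simp [rowSum]

theorem rowSum_last_col {t : ℕ → ℕ → ℝ} (ht : ∀ i j, t i j ≠ 0) {n M i j : ℕ}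
    (hi : i < M) (hj : j + 1 = n) : rowSum t n (M + 1) i j = rowSum t n M i j := by
  subst hj
  rw [rowSum, if_neg hi.ne]
  simp [mul_inv_cancel_left₀ (ht M j)]

/-- The bidiagonal form of the recursion, obtained by telescoping two neighbouring columns. -/
theorem rowSum_succ_col {t : ℕ → ℕ → ℝ} (ht : ∀ i j, t i j ≠ 0) {n M i j : ℕ}
    (hi : i < M) (hj : j + 1 < n) :
    rowSum t n (M + 1) i j
      = rowSum t n M i j + t M j * (t M (j + 1))⁻¹ * rowSum t n (M + 1) i (j + 1) := by
  rw [rowSum, if_neg hi.ne, rowSum, if_neg hi.ne, Finset.sum_eq_sum_Ico_succ_bot (by omega),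
    mul_inv_cancel_left₀ (ht M j), ← Finset.mul_sum, ← Finset.mul_sum]
  congr 1
  rw [mul_assoc, inv_mul_cancel_left₀ (ht M (j + 1))]

/-- Subtracting from each column a multiple of the column to its right preserves the
determinant. -/
theorem det_eq_of_col_succ {n : ℕ} {A B : Matrix (Fin (n + 1)) (Fin (n + 1)) ℝ}
    (c : Fin n → ℝ) (h_last : ∀ a, A a (Fin.last n) = B a (Fin.last n))
    (h_succ : ∀ a (b : Fin n), A a b.castSucc = B a b.castSucc + c b * A a b.succ) :
    A.det = B.det := by
  rw [← Matrix.det_submatrix_equiv_self Fin.revPerm A,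
    ← Matrix.det_submatrix_equiv_self Fin.revPerm B]
  apply Matrix.det_eq_of_forall_col_eq_smul_add_pred (fun b => c b.rev)
  · intro a
    simp [h_last]
  · intro a b
    simp [Fin.rev_succ, Fin.rev_castSucc, h_succ]

/-- The `(k+1) × (k+1)` contiguous block of path sums through the rows `< M`. -/
noncomputable def block (t : ℕ → ℕ → ℝ) (n M i j k : ℕ) : Matrix (Fin (k + 1)) (Fin (k + 1)) ℝ :=
  Matrix.of fun a b => rowSum t n M (i + a) (j + b)

/-- The block ending in the last row: clearing that row by column operations leaves the
block of the array with the last row removed, times the corner entry of `t`. -/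
theorem det_block_last_row {t : ℕ → ℕ → ℝ} (ht : ∀ i j, t i j ≠ 0) {n : ℕ} (i j k : ℕ)
    (hj : j + k < n) :
    (block t n (i + k + 1) i j k).det = ∏ s : Fin (k + 1), t (i + s) (j + s) := by
  induction k with
  | zero => simp [block, rowSum_self]
  | succ k ih =>
    let A := block t n (i + (k + 1) + 1) i j (k + 1)
    let B : Matrix (Fin (k + 2)) (Fin (k + 2)) ℝ := Matrix.of fun a b =>
      Fin.lastCases (A a (Fin.last _)) (fun b : Fin (k + 1) =>
        Fin.lastCases 0 (fun a : Fin (k + 1) => block t n (i + k + 1) i j k a b) a) b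
    have hB : A.det = B.det := by
      apply det_eq_of_col_succ
        (fun b => t (i + (k + 1)) (j + b) * (t (i + (k + 1)) (j + b + 1))⁻¹)
      · intro a
        simp [B]
      · intro a b
        induction a using Fin.lastCases with
        | last =>
          simp [A, B, block, rowSum_self, ← add_assoc, mul_assoc, inv_mul_cancel₀ (ht _ _)]
        | cast a =>
          have := rowSum_succ_col ht (n := n) (M := i + (k + 1)) (i := i + a) (j := j + b)
            (by omega) (by omega)
          simpa [A, B, block, ← add_assoc] using this
    change A.det = _
    rw [hB, Matrix.det_succ_row B (Fin.last _), Fin.sum_univ_castSucc, Fin.prod_univ_castSucc]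
    have hsub : B.submatrix (Fin.last (k + 1)).succAbove (Fin.last (k + 1)).succAbove
        = block t n (i + k + 1) i j k := by
      ext a b
      simp [B]
    rw [hsub, ih (by omega)]
    simp [B, A, block, rowSum_self, mul_comm]

/-- Adding rows below a block that ends in the last column does not change its determinant. -/
theorem det_block_last_col {t : ℕ → ℕ → ℝ} (ht : ∀ i j, t i j ≠ 0) {n : ℕ} (i j k d : ℕ)
    (hj : j + k + 1 = n) :
    (block t n (i + k + 1 + d) i j k).det = (block t n (i + k + 1) i j k).det := by
  induction d with
  | zero => rfl
  | succ d ih =>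
    rw [← ih]
    apply det_eq_of_col_succ
      (fun b => t (i + k + 1 + d) (j + b) * (t (i + k + 1 + d) (j + b + 1))⁻¹)
    · intro a
      exact rowSum_last_col ht (M := i + k + 1 + d) (i := i + a) (by omega) (by simpa using hj)
    · intro a b
      exact rowSum_succ_col ht (M := i + k + 1 + d) (i := i + a) (by omega) (by simp; omega)

/-! ### The weight of an extended path -/

theorem sort_insert_max {m : ℕ} {I : Finset (Fin m)} {a : Fin m} (h : ∀ x ∈ I, x < a) :
    (insert a I).sort (· ≤ ·) = I.sort (· ≤ ·) ++ [a] := by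
  have ha : a ∉ I := fun h' => lt_irrefl _ (h a h')
  refine List.Perm.eq_of_pairwise' (r := (· ≤ ·)) (Finset.pairwise_sort _ _) ?_ ?_
  · rw [List.pairwise_append]
    refine ⟨Finset.pairwise_sort _ _, by simp, ?_⟩
    intro x hx y hy
    simp only [List.mem_singleton] at hy
    subst hy
    exact (h x (by simpa using hx)).le
  · rw [← Multiset.coe_eq_coe, ← Multiset.coe_add]
    simp only [Finset.insert_val_of_notMem ha, Finset.sort_eq, Multiset.coe_singleton]
    rw [add_comm, Multiset.singleton_add]

/-- Appending the turn `(a, b)` below and to the left of all turns of a path that ends in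
column `c` multiplies its weight by `t_{a c}⁻¹ t_{a b}`. -/
theorem gammaWeight_insert {m n : ℕ} (T : Matrix (Fin m) (Fin n) ℝ)
    {I : Finset (Fin m)} {J : Finset (Fin n)} {a : Fin m} {b c : Fin n}
    (hI : ∀ x ∈ I, x < a) (hc : c ∈ J) (hcJ : ∀ y ∈ J, c ≤ y) (hb : b < c)
    (hcard : J.card = I.card) :
    gammaWeight T (insert a I) (insert b J) = gammaWeight T I J * ((T a c)⁻¹ * T a b) := by
  have hJ0 : 0 < J.card := Finset.card_pos.2 ⟨c, hc⟩
  have hIne : I.Nonempty := Finset.card_pos.1 (by omega)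
  have haI : a ∉ I := fun h => lt_irrefl _ (hI a h)
  have hbJ' : ∀ y ∈ J, b < y := fun y hy => hb.trans_le (hcJ y hy)
  have hbJ : b ∉ J := fun h => lt_irrefl _ (hbJ' b h)
  have hcm : (J.sort (· ≤ ·))[0]? = some c := by
    have h0 : 0 < (J.sort (· ≤ ·)).length := by simpa using hJ0
    rw [List.getElem?_eq_getElem h0, Finset.sorted_zero_eq_min']
    congr 1
    exact le_antisymm (Finset.min'_le _ _ hc) (Finset.le_min' _ _ _ hcJ)
  unfold gammaWeight
  rw [dif_pos ⟨Finset.insert_nonempty _ _, Finset.insert_nonempty _ _,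
    by rw [Finset.card_insert_of_notMem haI, Finset.card_insert_of_notMem hbJ, hcard]⟩,
    dif_pos ⟨hIne, ⟨c, hc⟩, hcard.symm⟩]
  obtain ⟨p, hp⟩ : ∃ p, I.card = p + 1 := ⟨I.card - 1, by omega⟩
  have hlI : (I.sort (· ≤ ·)).length = p + 1 := by simpa using hp
  have hlJ : (J.sort (· ≤ ·)).length = p + 1 := by simpa using hcard.trans hp
  have hrow : ∀ s, s < p + 1 → ∀ d d',
      (I.sort (· ≤ ·) ++ [a]).getD s d = (I.sort (· ≤ ·)).getD s d' := by
    intro s hs d d'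
    rw [List.getD_eq_getElem _ _ (by simp; omega), List.getD_eq_getElem _ _ (by omega),
      List.getElem_append_left]
  have hcol : ∀ s, s < p + 1 → ∀ d d',
      (b :: J.sort (· ≤ ·)).getD (p + 1 - s) d = (J.sort (· ≤ ·)).getD (p - s) d' := by
    intro s hs d d'
    rw [show p + 1 - s = (p - s) + 1 by omega, List.getD_cons_succ,
      List.getD_eq_getElem _ _ (by omega), List.getD_eq_getElem _ _ (by omega)]
  simp only [sort_insert_max hI, Finset.sort_insert (· ≤ ·) (fun y hy => (hbJ' y hy).le) hbJ,
    Finset.card_insert_of_notMem haI, hp, Nat.add_sub_cancel]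
  rw [Finset.prod_range_succ, ← mul_assoc]
  have hd : ∀ d d', T ((I.sort (· ≤ ·) ++ [a]).getD (p + 1) d) = T a ∧
      (b :: J.sort (· ≤ ·)).getD (p + 1 - p) d' = c ∧
      (b :: J.sort (· ≤ ·)).getD (p + 1 - (p + 1)) d' = b := by
    intro d d'
    refine ⟨?_, ?_, by simp⟩
    · rw [List.getD_eq_getElem _ _ (by simp; omega), List.getElem_append_right (by omega)]
      simp
    · rw [show p + 1 - p = 0 + 1 by omega, List.getD_cons_succ, List.getD_eq_getElem?_getD, hcm]
      rfl
  rw [(hd _ (((insert b J).min' (Finset.insert_nonempty _ _)))).1, (hd a _).2.1, (hd a _).2.2]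
  congr 2
  · rw [hrow 0 (by omega), hcol 0 (by omega)]
  · refine Finset.prod_congr rfl fun s hs => ?_
    have hs := Finset.mem_range.1 hs
    rw [hrow (s + 1) (by omega), hcol s (by omega), hcol (s + 1) (by omega)]

/-! ### Path sums over the first rows -/

/-- The pairs `(I, J)` encoding the Γ-paths from row `i` to column `j` all of whose turns lie
in rows `< M`. -/
def pathPairs {m n : ℕ} (M : ℕ) (i : Fin m) (j : Fin n) :
    Finset (Finset (Fin m) × Finset (Fin n)) :=
  Finset.univ.filter fun p =>
    (i ∈ p.1 ∧ ∀ x ∈ p.1, i ≤ x ∧ (x : ℕ) < M) ∧ (j ∈ p.2 ∧ ∀ y ∈ p.2, j ≤ y) ∧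
      p.2.card = p.1.card

theorem mem_pathPairs {m n M : ℕ} {i : Fin m} {j : Fin n}
    {p : Finset (Fin m) × Finset (Fin n)} :
    p ∈ pathPairs M i j ↔ (i ∈ p.1 ∧ ∀ x ∈ p.1, i ≤ x ∧ (x : ℕ) < M) ∧
      (j ∈ p.2 ∧ ∀ y ∈ p.2, j ≤ y) ∧ p.2.card = p.1.card := by
  simp [pathPairs]

theorem min_eq_coe_iff {m : ℕ} {I : Finset (Fin m)} {i : Fin m} :
    I.min = (i : WithTop (Fin m)) ↔ i ∈ I ∧ ∀ x ∈ I, i ≤ x := by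
  constructor
  · intro h
    exact ⟨Finset.mem_of_min h, fun x hx => Finset.min_le_of_eq hx h⟩
  · rintro ⟨h1, h2⟩
    exact le_antisymm (Finset.min_le h1) (Finset.le_min fun x hx => WithTop.coe_le_coe.2 (h2 x hx))

theorem XGamma_eq_sum_pathPairs {m n : ℕ} (T : Matrix (Fin m) (Fin n) ℝ) (i : Fin m)
    (j : Fin n) : XGamma T i j = ∑ p ∈ pathPairs m i j, gammaWeight T p.1 p.2 := by
  simp only [XGamma, Matrix.of_apply, min_eq_coe_iff]
  rw [Finset.sum_sigma']
  refine Finset.sum_bij' (fun p _ => (p.1, p.2)) (fun p _ => ⟨p.1, p.2⟩) ?_ ?_ ?_ ?_ ?_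
  · rintro ⟨I, J⟩ h
    simpa [mem_pathPairs, and_assoc] using h
  · rintro ⟨I, J⟩ h
    simpa [mem_pathPairs, and_assoc] using h
  all_goals simp

theorem sum_pathPairs_self {m n : ℕ} (T : Matrix (Fin m) (Fin n) ℝ) (i : Fin m) (j : Fin n) :
    ∑ p ∈ pathPairs (i + 1) i j, gammaWeight T p.1 p.2 = T i j := by
  have h : pathPairs (i + 1) i j = {(({i} : Finset (Fin m)), ({j} : Finset (Fin n)))} := by
    ext ⟨I, J⟩
    simp only [mem_pathPairs, Finset.mem_singleton, Prod.mk.injEq]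
    constructor
    · rintro ⟨⟨h1, h2⟩, ⟨h3, h4⟩, h5⟩
      have hI : I = {i} := Finset.eq_singleton_iff_unique_mem.2
        ⟨h1, fun x hx => Fin.ext (by have := h2 x hx; rw [Fin.le_def] at this; omega)⟩
      refine ⟨hI, ?_⟩
      rw [hI, Finset.card_singleton, Finset.card_eq_one] at h5
      obtain ⟨y, rfl⟩ := h5
      rw [Finset.mem_singleton] at h3
      rw [h3]
    · rintro ⟨rfl, rfl⟩
      simp
  rw [h, Finset.sum_singleton]
  simp [gammaWeight]

/-- The paths that turn in the new row `M` arise uniquely from a path through the rows `< M`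
ending in some column `j' > j` by appending the turn `(M, j)`. -/
theorem sum_pathPairs_succ {m n : ℕ} (T : Matrix (Fin m) (Fin n) ℝ) (M i : Fin m) (j : Fin n)
    (hi : i < M) :
    ∑ p ∈ pathPairs (M + 1) i j, gammaWeight T p.1 p.2
      = ∑ p ∈ pathPairs M i j, gammaWeight T p.1 p.2
        + ∑ j' ∈ Finset.Ioi j, ∑ p ∈ pathPairs M i j',
            gammaWeight T p.1 p.2 * ((T M j')⁻¹ * T M j) := by
  rw [← Finset.sum_filter_add_sum_filter_not _ (fun p => M ∉ p.1)]
  congr 1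
  · refine Finset.sum_congr ?_ fun _ _ => rfl
    ext ⟨I, J⟩
    simp only [Finset.mem_filter, mem_pathPairs]
    constructor
    · rintro ⟨⟨⟨h1, h2⟩, h3⟩, h4⟩
      refine ⟨⟨h1, fun x hx => ⟨(h2 x hx).1, ?_⟩⟩, h3⟩
      have hx' := (h2 x hx).2
      have : (x : ℕ) ≠ M := fun h => h4 (Fin.ext h ▸ hx)
      omega
    · rintro ⟨⟨h1, h2⟩, h3⟩
      refine ⟨⟨⟨h1, fun x hx => ⟨(h2 x hx).1, by have := (h2 x hx).2; omega⟩⟩, h3⟩, ?_⟩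
      intro h
      exact lt_irrefl _ (h2 M h).2
  · rw [Finset.sum_sigma']
    symm
    refine Finset.sum_bij (fun q _ => (insert M q.2.1, insert j q.2.2)) ?_ ?_ ?_ ?_
    · rintro ⟨j', I, J⟩ h
      simp only [Finset.mem_sigma, Finset.mem_Ioi, mem_pathPairs] at h
      obtain ⟨hj, ⟨h1, h2⟩, ⟨h3, h4⟩, h5⟩ := h
      have hM : M ∉ I := fun h => lt_irrefl _ (h2 M h).2
      have hjJ : j ∉ J := fun h => lt_irrefl _ (hj.trans_le (h4 j h))
      simp only [Finset.mem_filter, mem_pathPairs, Finset.mem_insert, not_not]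
      refine ⟨⟨⟨Or.inr h1, ?_⟩, ⟨by simp, ?_⟩, ?_⟩, by simp⟩
      · rintro x (rfl | hx)
        · exact ⟨hi.le, by omega⟩
        · exact ⟨(h2 x hx).1, by have := (h2 x hx).2; omega⟩
      · rintro y (rfl | hy)
        · exact le_rfl
        · exact hj.le.trans (h4 y hy)
      · rw [Finset.card_insert_of_notMem hM, Finset.card_insert_of_notMem hjJ, h5]
    · rintro ⟨j', I, J⟩ h ⟨j₂, I₂, J₂⟩ h' heq
      simp only [Finset.mem_sigma, Finset.mem_Ioi, mem_pathPairs] at h h'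
      obtain ⟨hj, ⟨h1, h2⟩, ⟨h3, h4⟩, h5⟩ := h
      obtain ⟨hj', ⟨h1', h2'⟩, ⟨h3', h4'⟩, h5'⟩ := h'
      have hM : M ∉ I := fun h => lt_irrefl _ (h2 M h).2
      have hjJ : j ∉ J := fun h => lt_irrefl _ (hj.trans_le (h4 j h))
      have hM' : M ∉ I₂ := fun h => lt_irrefl _ (h2' M h).2
      have hjJ' : j ∉ J₂ := fun h => lt_irrefl _ (hj'.trans_le (h4' j h))
      simp only [Prod.mk.injEq] at heq
      have hI : I = I₂ := by
        rw [← Finset.erase_insert hM, heq.1, Finset.erase_insert hM']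
      have hJ : J = J₂ := by
        rw [← Finset.erase_insert hjJ, heq.2, Finset.erase_insert hjJ']
      subst hI hJ
      have : j' = j₂ := le_antisymm (h4 _ h3') (h4' _ h3)
      rw [this]
    · rintro ⟨I, J⟩ h
      simp only [Finset.mem_filter, mem_pathPairs, not_not] at h
      obtain ⟨⟨⟨h1, h2⟩, ⟨h3, h4⟩, h5⟩, hM⟩ := h
      have hcJ := Finset.card_erase_add_one h3
      have hcI := Finset.card_erase_add_one hM
      have hiI : i ∈ I.erase M := Finset.mem_erase.2 ⟨hi.ne, h1⟩
      have hposI : 0 < (I.erase M).card := Finset.card_pos.2 ⟨i, hiI⟩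
      have hne : (J.erase j).Nonempty := Finset.card_pos.1 (by omega)
      have hmem := Finset.min'_mem _ hne
      refine ⟨⟨(J.erase j).min' hne, I.erase M, J.erase j⟩, ?_, ?_⟩
      · simp only [Finset.mem_sigma, Finset.mem_Ioi, mem_pathPairs]
        refine ⟨lt_of_le_of_ne (h4 _ (Finset.mem_of_mem_erase hmem))
          (Finset.ne_of_mem_erase hmem).symm, ⟨hiI, ?_⟩,
          ⟨hmem, fun y hy => Finset.min'_le _ _ hy⟩, by omega⟩
        intro x hx
        have hxM : (x : ℕ) ≠ M := fun h => Finset.ne_of_mem_erase hx (Fin.ext h)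
        have := h2 x (Finset.mem_of_mem_erase hx)
        exact ⟨this.1, by omega⟩
      · simp only [Finset.insert_erase hM, Finset.insert_erase h3]
    · rintro ⟨j', I, J⟩ h
      simp only [Finset.mem_sigma, Finset.mem_Ioi, mem_pathPairs] at h
      obtain ⟨hj, ⟨h1, h2⟩, ⟨h3, h4⟩, h5⟩ := h
      exact (gammaWeight_insert T (fun x hx => (h2 x hx).2) h3 h4 hj h5).symm

/-- Extension of a matrix to `ℕ × ℕ` by the nonzero value `1`. -/
def extendOne {m n : ℕ} (T : Matrix (Fin m) (Fin n) ℝ) (i j : ℕ) : ℝ :=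
  if h : i < m ∧ j < n then T ⟨i, h.1⟩ ⟨j, h.2⟩ else 1

theorem extendOne_coe {m n : ℕ} (T : Matrix (Fin m) (Fin n) ℝ) (i : Fin m) (j : Fin n) :
    extendOne T i j = T i j := by
  simp [extendOne]

theorem extendOne_ne_zero {m n : ℕ} {T : Matrix (Fin m) (Fin n) ℝ} (hT : EntrywisePos T)
    (i j : ℕ) : extendOne T i j ≠ 0 := by
  unfold extendOne
  split_ifs
  · exact (hT _ _).ne'
  · exact one_ne_zero

theorem sum_pathPairs_eq_rowSum {m n : ℕ} {T : Matrix (Fin m) (Fin n) ℝ} (hT : EntrywisePos T)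
    (M : ℕ) (hM : M ≤ m) (i : Fin m) (hi : (i : ℕ) < M) (j : Fin n) :
    ∑ p ∈ pathPairs M i j, gammaWeight T p.1 p.2 = rowSum (extendOne T) n M i j := by
  induction M generalizing j with
  | zero => omega
  | succ M ih =>
    rcases Nat.lt_succ_iff_lt_or_eq.1 hi with h | rfl
    · have hstep := sum_pathPairs_succ T ⟨M, hM⟩ i j h
      simp only [← Finset.sum_mul, ih (by omega) h] at hstep
      rw [hstep, rowSum, if_neg h.ne, Finset.sum_eq_sum_Ico_succ_bot j.isLt,
        mul_inv_cancel_left₀ (extendOne_ne_zero hT _ _)]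
      congr 1
      have hIco : Finset.Ico ((j : ℕ) + 1) n = (Finset.Ioi j).map Fin.valEmbedding := by
        rw [Fin.map_valEmbedding_Ioi]
        ext x
        simp
      rw [hIco, Finset.sum_map]
      refine Finset.sum_congr rfl fun j' _ => ?_
      have hM' : ∀ l : Fin n, extendOne T M l = T ⟨M, hM⟩ l := extendOne_coe T ⟨M, hM⟩
      simp only [Fin.valEmbedding_apply, hM']
      ring
    · rw [sum_pathPairs_self, rowSum_self, extendOne_coe]

/-- the largest contiguous minor of `X_Γ(T)` with top-left corner `(i,j)`
equals `t_{i,j} t_{i+1,j+1} ⋯ t_{i+k,j+k}` where `k = min(m−i, n−j)` (1-based). -/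
theorem contiguous_minor_eq_prod {m n : ℕ} (T : Matrix (Fin m) (Fin n) ℝ)
    (hT : EntrywisePos T) (i : Fin m) (j : Fin n) (k : ℕ)
    (hk : k = min (m - 1 - (i : ℕ)) (n - 1 - (j : ℕ))) :
    ((XGamma T).submatrix
        (fun s : Fin (k + 1) =>
          (⟨(i : ℕ) + s, by have := s.isLt; have := i.isLt; have := j.isLt; omega⟩ : Fin m))
        (fun s : Fin (k + 1) =>
          (⟨(j : ℕ) + s, by have := s.isLt; have := i.isLt; have := j.isLt; omega⟩ : Fin n))).det
      = ∏ s : Fin (k + 1),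
          T ⟨(i : ℕ) + s, by have := s.isLt; have := i.isLt; have := j.isLt; omega⟩
            ⟨(j : ℕ) + s, by have := s.isLt; have := i.isLt; have := j.isLt; omega⟩ := by
  have hX : ∀ (a : Fin m) (b : Fin n), XGamma T a b = rowSum (extendOne T) n m a b :=
    fun a b => by
      rw [XGamma_eq_sum_pathPairs, sum_pathPairs_eq_rowSum hT m le_rfl a a.isLt b]
  have ht := extendOne_ne_zero hT
  have hi := i.isLt
  have hj := j.isLt
  trans (block (extendOne T) n m i j k).det
  · congr 1
    ext a b
    simp [hX, block]
  trans (block (extendOne T) n (i + k + 1) i j k).det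
  · -- Either no rows lie below the block, or the block ends in the last column.
    rcases Nat.lt_or_ge (i + k + 1) m with h | h
    · obtain ⟨d, hd⟩ := Nat.exists_eq_add_of_le h.le
      have hcol := det_block_last_col ht (n := n) i j k d (by omega)
      rwa [← hd] at hcol
    · have hm : m = i + k + 1 := by omega
      rw [← hm]
  rw [det_block_last_row ht i j k (by omega)]
  refine Finset.prod_congr rfl fun s _ => ?_
  exact extendOne_coe T ⟨i + s, by omega⟩ ⟨j + s, by omega⟩
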